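/- arXiv:1405.6669 — 2 statements merged into one kernel-verified Lean document; each statement's English description precedes it below -/
import Mathlib

section
/- Let $G$ be a group and let $a_1,\dots,a_k$ ($k \ge 2$) be elements of $G$ satisfying the braid relations, and set $\bar b_i = a_{i+1}^{-1} a_i a_{i+1}$. Then the sequence $(a_{k-1}, a_{k-2}, \dots, a_2, a_1, a_k, a_{k-1}, \dots, a_2, a_1)$ of length $2k-1$ is Hurwitz equivalent to the sequence $(a_k, a_k, \dots, a_k, \bar b_{k-1}, \bar b_{k-2}, \dots, \bar b_2, \bar b_1)$, where $a_k$ is repeated $k$ times. -/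
/-- One elementary (Hurwitz) transformation of sequences in a group. -/
def HurwitzStep {G : Type*} [Group G] (s t : List G) : Prop :=
  ∃ (l₁ l₂ : List G) (x y : G),
    (s = l₁ ++ x :: y :: l₂ ∧ t = l₁ ++ (x * y * x⁻¹) :: x :: l₂) ∨
    (s = l₁ ++ x :: y :: l₂ ∧ t = l₁ ++ y :: (y⁻¹ * x * y) :: l₂)

/-- Hurwitz equivalence: finitely many elementary transformations. -/
def HurwitzEquiv {G : Type*} [Group G] : List G → List G → Prop :=
  Relation.ReflTransGen HurwitzStep

/-- The sequence `a k, a (k-1), …, a m` (descending indices). -/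
def seqDesc {G : Type*} (a : ℕ → G) (k m : ℕ) : List G :=
  (List.range (k + 1 - m)).map fun i => a (k - i)

/-!
The proof is by induction on `k`. Since `a k` commutes with `a 1, …, a (k - 2)`, it can be moved
left past them, which exposes the sequence for `k - 1`. By induction that sequence becomes a block
of copies of `x = a (k - 1)` followed by the `b̄ i`. The braid relation is equivalent to
`x⁻¹ * (y⁻¹ * x * y) * x = y`; with `y = a k` it lets the pair `(x, y)` run through the block,
turning every `x` into a `y` and leaving `y⁻¹ * x * y = b̄ (k - 1)` behind.
-/

section Group

variable {G : Type*} [Group G]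

theorem inv_mul_conj_mul_eq_of_braid {x y : G} (h : x * y * x = y * x * y) :
    x⁻¹ * (y⁻¹ * x * y) * x = y :=
  calc x⁻¹ * (y⁻¹ * x * y) * x = x⁻¹ * y⁻¹ * (x * y * x) := by group
    _ = x⁻¹ * y⁻¹ * (y * x * y) := by rw [h]
    _ = y := by group

theorem HurwitzStep.append_left {s t : List G} (l : List G) (h : HurwitzStep s t) :
    HurwitzStep (l ++ s) (l ++ t) := by
  obtain ⟨l₁, l₂, x, y, ⟨rfl, rfl⟩ | ⟨rfl, rfl⟩⟩ := h
  · exact ⟨l ++ l₁, l₂, x, y, .inl (by simp)⟩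
  · exact ⟨l ++ l₁, l₂, x, y, .inr (by simp)⟩

namespace HurwitzEquiv

@[refl]
theorem refl (s : List G) : HurwitzEquiv s s :=
  Relation.ReflTransGen.refl

theorem trans {s t u : List G} (hst : HurwitzEquiv s t) (htu : HurwitzEquiv t u) :
    HurwitzEquiv s u :=
  Relation.ReflTransGen.trans hst htu

instance : Trans (HurwitzEquiv (G := G)) HurwitzEquiv HurwitzEquiv :=
  ⟨trans⟩

theorem append_left {s t : List G} (l : List G) (h : HurwitzEquiv s t) :
    HurwitzEquiv (l ++ s) (l ++ t) :=
  Relation.ReflTransGen.lift (l ++ ·) (fun _ _ ↦ HurwitzStep.append_left l) _ _ h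

theorem cons {s t : List G} (x : G) (h : HurwitzEquiv s t) : HurwitzEquiv (x :: s) (x :: t) :=
  h.append_left [x]

theorem swap_conj (x y : G) (l : List G) :
    HurwitzEquiv (x :: y :: l) (y :: (y⁻¹ * x * y) :: l) :=
  .single ⟨[], l, x, y, .inr ⟨rfl, rfl⟩⟩

theorem swap_of_commute {x y : G} (h : Commute x y) (l : List G) :
    HurwitzEquiv (x :: y :: l) (y :: x :: l) := by
  simpa only [h.symm.inv_mul_cancel] using swap_conj x y l

theorem middle_of_forall_commute {s : List G} {y : G} (h : ∀ x ∈ s, Commute x y) (l : List G) :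
    HurwitzEquiv (s ++ y :: l) (y :: (s ++ l)) := by
  induction s with
  | nil => rfl
  | cons x s ih =>
    obtain ⟨hx, hs⟩ := List.forall_mem_cons.mp h
    exact ((ih hs).cons x).trans (swap_of_commute hx (s ++ l))

theorem cons_cons_replicate_of_braid {x y : G} (h : x * y * x = y * x * y) (n : ℕ) (l : List G) :
    HurwitzEquiv (x :: y :: (List.replicate n x ++ l))
      (List.replicate (n + 1) y ++ (y⁻¹ * x * y) :: l) := by
  induction n with
  | zero => exact swap_conj x y l
  | succ n ih =>
    have conj_swap : HurwitzEquiv ((y⁻¹ * x * y) :: x :: (List.replicate n x ++ l))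
        (x :: y :: (List.replicate n x ++ l)) := by
      simpa only [inv_mul_conj_mul_eq_of_braid h] using
        swap_conj (y⁻¹ * x * y) x (List.replicate n x ++ l)
    calc HurwitzEquiv (x :: y :: x :: (List.replicate n x ++ l))
          (y :: (y⁻¹ * x * y) :: x :: (List.replicate n x ++ l)) := swap_conj x y _
      HurwitzEquiv _ (y :: x :: y :: (List.replicate n x ++ l)) := conj_swap.cons y
      HurwitzEquiv _ (y :: (List.replicate (n + 1) y ++ (y⁻¹ * x * y) :: l)) := ih.cons y

theorem cons_append_cons_cons_of_braid {x y : G} (hxy : x * y * x = y * x * y) {s t : List G}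
    (hs : ∀ z ∈ s, Commute z y) {n : ℕ}
    (h : HurwitzEquiv (s ++ x :: s) (List.replicate n x ++ t)) :
    HurwitzEquiv (x :: s ++ y :: x :: s)
      (List.replicate (n + 1) y ++ (y⁻¹ * x * y) :: t) :=
  calc HurwitzEquiv (x :: (s ++ y :: x :: s)) (x :: y :: (s ++ x :: s)) :=
        (middle_of_forall_commute hs (x :: s)).cons x
    HurwitzEquiv _ (x :: y :: (List.replicate n x ++ t)) := h.append_left [x, y]
    HurwitzEquiv _ (List.replicate (n + 1) y ++ (y⁻¹ * x * y) :: t) :=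
        cons_cons_replicate_of_braid hxy n t

end HurwitzEquiv

end Group

section SeqDesc

variable {α : Type*} (a : ℕ → α)

theorem seqDesc_succ {k m : ℕ} (h : m ≤ k + 1) :
    seqDesc a (k + 1) m = a (k + 1) :: seqDesc a k m := by
  have length_succ : k + 1 + 1 - m = (k + 1 - m) + 1 := Nat.succ_sub h
  simp [seqDesc, length_succ, List.range_succ_eq_map, Function.comp_def]

theorem mem_seqDesc {k m : ℕ} {x : α} : x ∈ seqDesc a k m ↔ ∃ i, m ≤ i ∧ i ≤ k ∧ a i = x := by
  simp only [seqDesc, List.mem_map, List.mem_range]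
  constructor
  · rintro ⟨i, hi, rfl⟩
    exact ⟨k - i, by lia, by lia, rfl⟩
  · rintro ⟨i, hmi, hik, rfl⟩
    exact ⟨k - i, by lia, by rw [Nat.sub_sub_self hik]⟩

end SeqDesc

/-- if `a 1, …, a k` (`k ≥ 2`) satisfy the braid relations and
`b̄ i = (a (i+1))⁻¹ * a i * a (i+1)`, then
`(a (k-1), …, a 1, a k, a (k-1), …, a 1) ∼ (a k, …, a k, b̄ (k-1), …, b̄ 1)`
with `a k` repeated `k` times. -/
theorem statement3 {G : Type*} [Group G] (k : ℕ) (hk : 2 ≤ k) (a : ℕ → G)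
    (hbraid : ∀ i, 1 ≤ i → i + 1 ≤ k →
      a i * a (i + 1) * a i = a (i + 1) * a i * a (i + 1))
    (hcomm : ∀ i j, 1 ≤ i → j ≤ k → i + 2 ≤ j → a i * a j = a j * a i) :
    HurwitzEquiv (seqDesc a (k - 1) 1 ++ seqDesc a k 1)
      (List.replicate k (a k) ++
        seqDesc (fun i => (a (i + 1))⁻¹ * a i * a (i + 1)) (k - 1) 1) := by
  obtain ⟨n, rfl⟩ : ∃ n, k = n + 1 := Nat.exists_eq_add_of_le' (one_le_two.trans hk)
  clear hk
  simp only [Nat.add_sub_cancel]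
  induction n with
  | zero => exact .refl [a 1]
  | succ n ih =>
    have ih' := ih (fun i hi hin ↦ hbraid i hi (by lia))
      (fun i j hi hj hij ↦ hcomm i j hi (by lia) hij)
    have lower_commute : ∀ x ∈ seqDesc a n 1, Commute x (a (n + 2)) := by
      intro x hx
      obtain ⟨i, hi, hin, rfl⟩ := (mem_seqDesc a).mp hx
      exact hcomm i (n + 2) hi le_rfl (by lia)
    simp only [seqDesc_succ _ (Nat.le_add_left 1 _)] at ih' ⊢
    exact .cons_append_cons_cons_of_braid (hbraid (n + 1) (by lia) le_rfl) lower_commute ih'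
end

section
/- Let $g \ge 3$ and let $G$ be a group containing elements $c_1,\dots,c_{2g+1}$ satisfying the braid relations and elements $x_1,\dots,x_g$ with $x_1 x_2 \cdots x_g = c_1 c_3 c_5 \cdots c_{2g-1} \cdot c_{2g+1}^{g-2}$. Set $\bar d_i = c_{i+1}^{-1} c_i c_{i+1}$ and $e_{i+1} = c_i c_{i+1} c_i^{-1}$, and assume $(c_1 c_2 \cdots c_{2g} c_{2g+1})^{2g+2} = 1$. Then for every integer $k$ with $0 \le k \le g+1$ one has $\big(\bar d_2 \bar d_4 \cdots \bar d_{2g} \cdot e_2 e_4 \cdots e_{2g} \cdot x_1 x_2 \cdots x_g \cdot c_{2g+1}^{4}\big)^{k} \cdot \big(\bar d_2 \bar d_4 \cdots \bar d_{2g} \cdot e_2 e_4 \cdots e_{2g} \cdot c_1 c_3 \cdots c_{2g-1} \cdot c_{2g+1}^{g+2}\big)^{g+1-k} = 1$. -/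
/-- The product `a m * a (m+1) * ⋯ * a k` (ascending indices). -/
def prodAsc {G : Type*} [Group G] (a : ℕ → G) (m k : ℕ) : G :=
  ((List.range (k + 1 - m)).map fun i => a (m + i)).prod

/-!
Put `T = c 1 * c 3 * ⋯ * c (2g+1)` and `P = d̄ 2 ⋯ d̄ (2g) * e 2 ⋯ e (2g)`. Conjugation by `P`
permutes the commuting elements `c 1, c 3, …, c (2g+1)` cyclically, so `P` commutes with `T`, and
pushing powers of `P` to the right collects all the conjugates of `c (2g+1)`:
`(P * c (2g+1)^(g+1))^(g+1) = T^(g+1) * P^(g+1)`. As `T² * P = (c 1 * c 2 * ⋯ * c (2g+1))²`, this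
gives `(P * T * c (2g+1)^(g+1))^(g+1) = (T² * P)^(g+1) = (c 1 * c 2 * ⋯ * c (2g+1))^(2g+2)`.
Here `P * T * c (2g+1)^(g+1)` is the base of the second power in the relator, and by the daisy
relation also that of the first.
-/

section Products

variable {M : Type*} [Monoid M]

theorem semiconjBy_prod_map_range {a : M} {u v : ℕ → M} {n : ℕ}
    (h : ∀ i < n, SemiconjBy a (u i) (v i)) :
    SemiconjBy a ((List.range n).map u).prod ((List.range n).map v).prod := by
  induction n with
  | zero => exact SemiconjBy.one_right a
  | succ n ih =>
    rw [List.prod_range_succ, List.prod_range_succ]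
    exact (ih fun i hi => h i (by omega)).mul_right (h n n.lt_succ_self)

theorem commute_prod_map_range {a : M} {u : ℕ → M} {n : ℕ} (h : ∀ i < n, Commute a (u i)) :
    Commute a ((List.range n).map u).prod :=
  semiconjBy_prod_map_range h

theorem prod_map_range_mul {u v : ℕ → M} {n : ℕ}
    (h : ∀ i j, i < j → j < n → Commute (u j) (v i)) :
    ((List.range n).map fun i => u i * v i).prod =
      ((List.range n).map u).prod * ((List.range n).map v).prod := by
  induction n with
  | zero => simp
  | succ n ih =>
    have hn : Commute (u n) ((List.range n).map v).prod :=
      commute_prod_map_range fun i hi => h i n hi n.lt_succ_self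
    rw [List.prod_range_succ, List.prod_range_succ, List.prod_range_succ,
      ih fun i j hij hj => h i j hij (by omega)]
    exact (hn.mul_mul_mul_comm _ _).symm

theorem prod_map_range_pow {u : ℕ → M} {n : ℕ}
    (h : ∀ i j, i < n → j < n → Commute (u i) (u j)) (m : ℕ) :
    ((List.range n).map fun i => u i ^ m).prod = ((List.range n).map u).prod ^ m := by
  induction m with
  | zero => simp
  | succ m ih =>
    simp only [pow_succ]
    rw [prod_map_range_mul fun i j hij hj => (h j i hj (hij.trans hj)).pow_left m, ih]

theorem mul_pow_eq_prod_mul_pow {p y : M} {u : ℕ → M} {n : ℕ}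
    (h : ∀ i < n, SemiconjBy (p ^ (i + 1)) y (u i)) :
    (p * y) ^ n = ((List.range n).map u).prod * p ^ n := by
  induction n with
  | zero => simp
  | succ n ih =>
    rw [pow_succ, ih fun i hi => h i (by omega), List.prod_range_succ, mul_assoc, ← mul_assoc _ p,
      ← pow_succ, (h n n.lt_succ_self).eq, ← mul_assoc]

end Products

section CyclicShift

variable {M : Type*} [Monoid M] {p q : M} {u : ℕ → M} {n : ℕ}

/-- Conjugation by `p` shifts the tuple `u 0, …, u n` cyclically: `p * u i = u (i + 1) * p` for
`i < n`, and `p * u n = u 0 * p`. Stated without inverses, so that it makes sense in a monoid. -/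
structure ShiftsCyclically (p : M) (u : ℕ → M) (n : ℕ) : Prop where
  shift : ∀ i < n, SemiconjBy p (u i) (u (i + 1))
  wrap : SemiconjBy p (u n) (u 0)

namespace ShiftsCyclically

theorem one (u : ℕ → M) : ShiftsCyclically 1 u 0 where
  shift i hi := absurd hi i.not_lt_zero
  wrap := SemiconjBy.one_left (u 0)

theorem mul_swap (hp : ShiftsCyclically p u n) (hq : SemiconjBy q (u n) (u (n + 1)))
    (hq' : SemiconjBy q (u (n + 1)) (u n)) (hqu : ∀ i < n, Commute q (u i))
    (hpu : Commute p (u (n + 1))) : ShiftsCyclically (p * q) u (n + 1) where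
  shift i hi := by
    rcases Nat.lt_succ_iff_lt_or_eq.mp hi with hlt | rfl
    · exact (hp.shift i hlt).mul_left (hqu i hlt)
    · exact SemiconjBy.mul_left hpu hq
  wrap := hp.wrap.mul_left hq'

theorem pow_succ_semiconjBy (hp : ShiftsCyclically p u n) {i : ℕ} (hi : i ≤ n) :
    SemiconjBy (p ^ (i + 1)) (u n) (u i) := by
  induction i with
  | zero => simpa using hp.wrap
  | succ i ih =>
    rw [pow_succ']
    exact (hp.shift i hi).mul_left (ih (by omega))

theorem commute_prod (hp : ShiftsCyclically p u n)
    (hu : ∀ i j, i ≤ n → j ≤ n → Commute (u i) (u j)) :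
    Commute p ((List.range (n + 1)).map u).prod := by
  have shifted : SemiconjBy p ((List.range (n + 1)).map u).prod
      (((List.range n).map fun i => u (i + 1)).prod * u 0) := by
    rw [List.prod_range_succ]
    exact (semiconjBy_prod_map_range hp.shift).mul_right hp.wrap
  have first : Commute (u 0) ((List.range n).map fun i => u (i + 1)).prod :=
    commute_prod_map_range fun i hi => hu 0 (i + 1) n.zero_le hi
  rwa [← first.eq, ← List.prod_range_succ'] at shifted

theorem mul_pow_last_pow (hp : ShiftsCyclically p u n)
    (hu : ∀ i j, i ≤ n → j ≤ n → Commute (u i) (u j)) (m : ℕ) :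
    (p * u n ^ m) ^ (n + 1) = ((List.range (n + 1)).map u).prod ^ m * p ^ (n + 1) := by
  rw [← prod_map_range_pow fun i j hi hj => hu i j (by omega) (by omega)]
  exact mul_pow_eq_prod_mul_pow fun i hi => (hp.pow_succ_semiconjBy (by omega)).pow_right m

theorem mul_prod_mul_pow_last_pow (hp : ShiftsCyclically p u n)
    (hu : ∀ i j, i ≤ n → j ≤ n → Commute (u i) (u j)) (m : ℕ) :
    (p * ((List.range n).map u).prod * u n ^ (m + 1)) ^ (n + 1) =
      ((List.range (n + 1)).map u).prod ^ (n + 1 + m) * p ^ (n + 1) := by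
  have hpT : Commute p ((List.range (n + 1)).map u).prod := hp.commute_prod hu
  have hTu : Commute ((List.range (n + 1)).map u).prod (u n) :=
    (commute_prod_map_range fun i hi => hu n i le_rfl (by omega)).symm
  calc (p * ((List.range n).map u).prod * u n ^ (m + 1)) ^ (n + 1)
      = (p * ((List.range (n + 1)).map u).prod * u n ^ m) ^ (n + 1) := by
        rw [List.prod_range_succ, pow_succ' (u n) m]
        simp only [mul_assoc]
    _ = (((List.range (n + 1)).map u).prod * (p * u n ^ m)) ^ (n + 1) := by
        rw [hpT.eq, mul_assoc]
    _ = ((List.range (n + 1)).map u).prod ^ (n + 1) * (p * u n ^ m) ^ (n + 1) :=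
        (hpT.symm.mul_right (hTu.pow_right m)).mul_pow (n + 1)
    _ = ((List.range (n + 1)).map u).prod ^ (n + 1 + m) * p ^ (n + 1) := by
        rw [hp.mul_pow_last_pow hu, ← mul_assoc, ← pow_add]

end ShiftsCyclically

end CyclicShift

section BraidTriple

/-- The braid relations for three consecutive generators `a`, `b`, `c`. -/
structure IsBraidTriple {M : Type*} [Monoid M] (a b c : M) : Prop where
  left : a * b * a = b * a * b
  right : b * c * b = c * b * c
  comm : Commute a c

namespace IsBraidTriple

section Monoid

variable {M : Type*} [Monoid M] {a b c : M}

theorem symm (h : IsBraidTriple a b c) : IsBraidTriple c b a :=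
  ⟨h.right.symm, h.left.symm, h.comm.symm⟩

theorem semiconjBy (h : IsBraidTriple a b c) : SemiconjBy (b * c * a * b) a c :=
  calc b * c * a * b * a = b * c * (a * b * a) := by simp only [mul_assoc]
    _ = b * c * b * (a * b) := by rw [h.left]; simp only [mul_assoc]
    _ = c * (b * c * a * b) := by rw [h.right]; simp only [mul_assoc]

theorem semiconjBy' (h : IsBraidTriple a b c) : SemiconjBy (b * c * a * b) c a := by
  rw [mul_assoc b c a, ← h.comm.eq, ← mul_assoc]
  exact h.symm.semiconjBy

theorem mul_mul_mul_sq (h : IsBraidTriple a b c) {w : M} (hb : Commute w b) (hc : Commute w c) :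
    (w * a * b * c) ^ 2 = (w * a) ^ 2 * (b * c * a * b) :=
  calc (w * a * b * c) ^ 2 = w * a * (b * c * w) * (a * b * c) := by
        simp only [sq, mul_assoc]
    _ = w * a * w * (b * c * a * b * c) := by
        rw [← (hb.mul_right hc).eq]; simp only [mul_assoc]
    _ = (w * a) ^ 2 * (b * c * a * b) := by
        rw [h.semiconjBy'.eq]; simp only [sq, mul_assoc]

end Monoid

end IsBraidTriple

variable {G : Type*} [Group G] {a b c : G}

/-- The product `d̄ * e` of the conjugates `d̄ = c⁻¹ * b * c` and `e = a * b * a⁻¹` of the middle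
generator of a braid triple; conjugation by it exchanges `a` and `c`. -/
def braidSwap (a b c : G) : G := (c⁻¹ * b * c) * (a * b * a⁻¹)

theorem commute_braidSwap {w : G} (ha : Commute w a) (hb : Commute w b) (hc : Commute w c) :
    Commute w (braidSwap a b c) :=
  ((hc.inv_right.mul_right hb).mul_right hc).mul_right ((ha.mul_right hb).mul_right ha.inv_right)

namespace IsBraidTriple

theorem sq_mul_braidSwap (h : IsBraidTriple a b c) :
    c ^ 2 * braidSwap a b c = b * c * a * b :=
  calc c ^ 2 * braidSwap a b c = (c * b * c) * a * b * a⁻¹ := by rw [braidSwap]; group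
    _ = b * c * (b * a * b) * a⁻¹ := by rw [← h.right]; group
    _ = b * c * a * b := by rw [← h.left]; group

theorem braidSwap_eq (h : IsBraidTriple a b c) :
    braidSwap a b c = (c ^ 2)⁻¹ * (b * c * a * b) := by
  rw [← h.sq_mul_braidSwap, inv_mul_cancel_left]

theorem braidSwap_semiconjBy (h : IsBraidTriple a b c) : SemiconjBy (braidSwap a b c) a c := by
  rw [h.braidSwap_eq]
  exact ((Commute.refl c).pow_left 2).inv_left.semiconjBy.mul_left h.semiconjBy

theorem braidSwap_semiconjBy' (h : IsBraidTriple a b c) : SemiconjBy (braidSwap a b c) c a := by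
  rw [h.braidSwap_eq]
  exact (h.comm.symm.pow_left 2).inv_left.semiconjBy.mul_left h.semiconjBy'

end IsBraidTriple

end BraidTriple

section BraidChain

/-- The braid relations among `c 1, …, c n`, indexed from `1` as for the standard chain of Dehn
twists; the other values of `c` are unconstrained. -/
structure SatisfiesBraidRelations {M : Type*} [Monoid M] (c : ℕ → M) (n : ℕ) : Prop where
  braid : ∀ i, 1 ≤ i → i + 1 ≤ n → c i * c (i + 1) * c i = c (i + 1) * c i * c (i + 1)
  comm : ∀ i j, 1 ≤ i → j ≤ n → i + 2 ≤ j → Commute (c i) (c j)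

/-- The odd-indexed element `c (2 * j + 1)` of a chain; `j` counts from `0`. -/
def oddTerm {α : Type*} (c : ℕ → α) (j : ℕ) : α := c (2 * j + 1)

namespace SatisfiesBraidRelations

variable {M : Type*} [Monoid M] {c : ℕ → M} {m n : ℕ}

theorem mono (h : SatisfiesBraidRelations c n) (hmn : m ≤ n) : SatisfiesBraidRelations c m where
  braid i hi hi' := h.braid i hi (hi'.trans hmn)
  comm i j hi hj hij := h.comm i j hi (hj.trans hmn) hij

theorem commute (h : SatisfiesBraidRelations c n) {i j : ℕ} (hi : i ∈ Set.Icc 1 n)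
    (hj : j ∈ Set.Icc 1 n) (hij : i + 1 ≠ j) (hji : j + 1 ≠ i) : Commute (c i) (c j) := by
  obtain ⟨hi1, hin⟩ := hi
  obtain ⟨hj1, hjn⟩ := hj
  rcases lt_trichotomy i j with hlt | rfl | hgt
  · exact h.comm i j hi1 hjn (by omega)
  · exact Commute.refl (c i)
  · exact (h.comm j i hj1 hin (by omega)).symm

theorem isBraidTriple (h : SatisfiesBraidRelations c n) {i : ℕ} (hi : 1 ≤ i) (hin : i + 2 ≤ n) :
    IsBraidTriple (c i) (c (i + 1)) (c (i + 2)) where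
  left := h.braid i hi (by omega)
  right := h.braid (i + 1) (by omega) hin
  comm := h.comm i (i + 2) hi hin le_rfl

theorem commute_oddTerm (h : SatisfiesBraidRelations c (2 * n + 1)) (i j : ℕ) (hi : i ≤ n)
    (hj : j ≤ n) : Commute (oddTerm c i) (oddTerm c j) :=
  h.commute ⟨by omega, by omega⟩ ⟨by omega, by omega⟩ (by omega) (by omega)

end SatisfiesBraidRelations

variable {G : Type*} [Group G]

theorem prodAsc_succ (u : ℕ → G) {m k : ℕ} (h : m ≤ k + 1) :
    prodAsc u m (k + 1) = prodAsc u m k * u (k + 1) := by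
  rw [prodAsc, Nat.succ_sub h, List.prod_range_succ, Nat.add_sub_cancel' h, prodAsc]

/-- The factor `d̄ (2 * j + 2) * e (2 * j + 2)` attached to the even-indexed element
`c (2 * j + 2)` of a chain and its two neighbours; `j` counts from `0`. -/
def evenSwap (c : ℕ → G) (j : ℕ) : G := braidSwap (c (2 * j + 1)) (c (2 * j + 2)) (c (2 * j + 3))

namespace SatisfiesBraidRelations

variable {c : ℕ → G} {n : ℕ}

theorem commute_oddTerm_evenSwap (h : SatisfiesBraidRelations c (2 * n + 1)) {i j : ℕ}
    (hi : i ≤ n) (hj : j < n) (hij : i ≠ j) (hij' : i ≠ j + 1) :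
    Commute (oddTerm c i) (evenSwap c j) := by
  apply commute_braidSwap <;>
    exact h.commute ⟨by omega, by omega⟩ ⟨by omega, by omega⟩ (by omega) (by omega)

theorem commute_oddTerm_prod_evenSwap (h : SatisfiesBraidRelations c (2 * (n + 1) + 1)) :
    Commute (oddTerm c (n + 1)) ((List.range n).map (evenSwap c)).prod :=
  commute_prod_map_range fun j hj =>
    h.commute_oddTerm_evenSwap le_rfl (by omega) (by omega) (by omega)

theorem shiftsCyclically_prod_evenSwap (h : SatisfiesBraidRelations c (2 * n + 1)) :
    ShiftsCyclically ((List.range n).map (evenSwap c)).prod (oddTerm c) n := by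
  induction n with
  | zero => exact ShiftsCyclically.one (oddTerm c)
  | succ n ih =>
    have triple : IsBraidTriple (c (2 * n + 1)) (c (2 * n + 2)) (c (2 * n + 3)) :=
      h.isBraidTriple (by omega) (by omega)
    rw [List.prod_range_succ]
    exact (ih (h.mono (by omega))).mul_swap triple.braidSwap_semiconjBy
      triple.braidSwap_semiconjBy'
      (fun i hi => (h.commute_oddTerm_evenSwap (by omega) (by omega) (by omega) (by omega)).symm)
      h.commute_oddTerm_prod_evenSwap.symm

theorem prodAsc_sq_succ (h : SatisfiesBraidRelations c (2 * (n + 1) + 1)) :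
    prodAsc c 1 (2 * (n + 1) + 1) ^ 2 =
      prodAsc c 1 (2 * n + 1) ^ 2 * (oddTerm c (n + 1) ^ 2 * evenSwap c n) := by
  have triple : IsBraidTriple (c (2 * n + 1)) (c (2 * n + 2)) (c (2 * n + 3)) :=
    h.isBraidTriple (by omega) (by omega)
  have far : ∀ i ∈ Set.Icc (2 * n + 2) (2 * n + 3), Commute (prodAsc c 1 (2 * n)) (c i) :=
    fun i ⟨hi, hi'⟩ => (commute_prod_map_range fun j hj =>
      h.commute ⟨by omega, by omega⟩ ⟨by omega, by omega⟩ (by omega) (by omega)).symm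
  have swap : oddTerm c (n + 1) ^ 2 * evenSwap c n =
      c (2 * n + 2) * c (2 * n + 3) * c (2 * n + 1) * c (2 * n + 2) := triple.sq_mul_braidSwap
  rw [swap, show 2 * (n + 1) + 1 = 2 * n + 1 + 1 + 1 by ring, prodAsc_succ c (by omega),
    prodAsc_succ c (by omega), prodAsc_succ c (by omega)]
  exact triple.mul_mul_mul_sq (far _ ⟨by omega, by omega⟩) (far _ ⟨by omega, by omega⟩)

theorem prod_oddTerm_sq_mul_prod_evenSwap (h : SatisfiesBraidRelations c (2 * n + 1)) :
    ((List.range (n + 1)).map (oddTerm c)).prod ^ 2 * ((List.range n).map (evenSwap c)).prod =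
      prodAsc c 1 (2 * n + 1) ^ 2 := by
  induction n with
  | zero => simp [prodAsc, oddTerm]
  | succ n ih =>
    have hodd : Commute ((List.range (n + 1)).map (oddTerm c)).prod (oddTerm c (n + 1)) :=
      (commute_prod_map_range fun i hi => h.commute_oddTerm _ i le_rfl (by omega)).symm
    rw [h.prodAsc_sq_succ, ← ih (h.mono (by omega)), List.prod_range_succ (oddTerm c) (n + 1),
      List.prod_range_succ (evenSwap c), hodd.mul_pow, ← mul_assoc]
    simp only [mul_assoc]
    rw [← mul_assoc (oddTerm c (n + 1) ^ 2), (h.commute_oddTerm_prod_evenSwap.pow_left 2).eq,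
      mul_assoc]

theorem prod_dBar_mul_prod_e (h : SatisfiesBraidRelations c (2 * n + 1)) :
    ((List.range n).map fun j => (c (2 * j + 3))⁻¹ * c (2 * j + 2) * c (2 * j + 3)).prod *
        ((List.range n).map fun j => c (2 * j + 1) * c (2 * j + 2) * (c (2 * j + 1))⁻¹).prod =
      ((List.range n).map (evenSwap c)).prod := by
  refine (prod_map_range_mul fun i j hij hj => ?_).symm
  have hc : ∀ k ∈ Set.Icc (2 * j + 2) (2 * j + 3),
      Commute (c k) (c (2 * i + 1) * c (2 * i + 2) * (c (2 * i + 1))⁻¹) := fun k ⟨hk, hk'⟩ => by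
    have h₁ : Commute (c k) (c (2 * i + 1)) :=
      h.commute ⟨by omega, by omega⟩ ⟨by omega, by omega⟩ (by omega) (by omega)
    have h₂ : Commute (c k) (c (2 * i + 2)) :=
      h.commute ⟨by omega, by omega⟩ ⟨by omega, by omega⟩ (by omega) (by omega)
    exact (h₁.mul_right h₂).mul_right h₁.inv_right
  have h₂ := hc (2 * j + 2) ⟨by omega, by omega⟩
  have h₃ := hc (2 * j + 3) ⟨by omega, by omega⟩
  exact (h₃.inv_left.mul_left h₂).mul_left h₃

theorem prod_dBar_mul_prod_e_mul_prod_odd_pow (h : SatisfiesBraidRelations c (2 * n + 1)) :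
    (((List.range n).map fun j => (c (2 * j + 3))⁻¹ * c (2 * j + 2) * c (2 * j + 3)).prod *
        ((List.range n).map fun j => c (2 * j + 1) * c (2 * j + 2) * (c (2 * j + 1))⁻¹).prod *
        ((List.range n).map fun j => c (2 * j + 1)).prod *
        c (2 * n + 1) ^ (n + 2)) ^ (n + 1) =
      prodAsc c 1 (2 * n + 1) ^ (2 * n + 2) := by
  have hP := h.shiftsCyclically_prod_evenSwap
  have hT := hP.commute_prod h.commute_oddTerm
  rw [h.prod_dBar_mul_prod_e]
  refine (hP.mul_prod_mul_pow_last_pow h.commute_oddTerm (n + 1)).trans ?_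
  rw [← two_mul, pow_mul, ← (hT.symm.pow_left 2).mul_pow, h.prod_oddTerm_sq_mul_prod_evenSwap,
    ← pow_mul, mul_add_one]

end SatisfiesBraidRelations

end BraidChain

theorem statement19_general {G : Type*} [Group G] (g : ℕ) (hg : 2 ≤ g) (c x : ℕ → G)
    (hbraid : ∀ i, 1 ≤ i → i + 1 ≤ 2 * g + 1 →
      c i * c (i + 1) * c i = c (i + 1) * c i * c (i + 1))
    (hcomm : ∀ i j, 1 ≤ i → j ≤ 2 * g + 1 → i + 2 ≤ j → c i * c j = c j * c i)
    (hdaisy : ((List.range g).map fun j => x (j + 1)).prod =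
      ((List.range g).map fun j => c (2 * j + 1)).prod * (c (2 * g + 1)) ^ (g - 2))
    (k : ℕ) (hk : k ≤ g + 1) :
    ((((List.range g).map fun j =>
          (c (2 * j + 3))⁻¹ * c (2 * j + 2) * c (2 * j + 3)).prod) *
        (((List.range g).map fun j =>
          c (2 * j + 1) * c (2 * j + 2) * (c (2 * j + 1))⁻¹).prod) *
        (((List.range g).map fun j => x (j + 1)).prod) *
        (c (2 * g + 1)) ^ 4) ^ k *
      ((((List.range g).map fun j =>
          (c (2 * j + 3))⁻¹ * c (2 * j + 2) * c (2 * j + 3)).prod) *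
        (((List.range g).map fun j =>
          c (2 * j + 1) * c (2 * j + 2) * (c (2 * j + 1))⁻¹).prod) *
        (((List.range g).map fun j => c (2 * j + 1)).prod) *
        (c (2 * g + 1)) ^ (g + 2)) ^ (g + 1 - k) = prodAsc c 1 (2 * g + 1) ^ (2 * g + 2) := by
  have daisy_substitution : ((List.range g).map fun j => x (j + 1)).prod * c (2 * g + 1) ^ 4 =
      ((List.range g).map fun j => c (2 * j + 1)).prod * c (2 * g + 1) ^ (g + 2) := by
    rw [hdaisy, mul_assoc, ← pow_add, show g - 2 + 4 = g + 2 by omega]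
  have hc : SatisfiesBraidRelations c (2 * g + 1) := ⟨hbraid, hcomm⟩
  rw [mul_assoc _ _ (c (2 * g + 1) ^ 4), daisy_substitution, ← mul_assoc, ← pow_add,
    Nat.add_sub_cancel' hk, hc.prod_dBar_mul_prod_e_mul_prod_odd_pow]

/-- the monodromy relator of the Lefschetz fibration on `Y(g,k)` of
Theorem 7.1: with `d̄ i = (c (i+1))⁻¹ * c i * c (i+1)` and
`e (i+1) = c i * c (i+1) * (c i)⁻¹`, assuming the braid relations, the daisy relation
`x 1 ⋯ x g = c 1 c 3 ⋯ c (2g-1) · c (2g+1)^{g-2}`, and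
`(c 1 c 2 ⋯ c (2g+1))^{2g+2} = 1`, for every `0 ≤ k ≤ g+1` one has
`(d̄ 2 ⋯ d̄ (2g) · e 2 ⋯ e (2g) · x 1 ⋯ x g · c (2g+1)^4)^k ·
(d̄ 2 ⋯ d̄ (2g) · e 2 ⋯ e (2g) · c 1 c 3 ⋯ c (2g-1) · c (2g+1)^{g+2})^{g+1-k} = 1`. -/
theorem statement19 {G : Type*} [Group G] (g : ℕ) (hg : 3 ≤ g) (c x : ℕ → G)
    (hbraid : ∀ i, 1 ≤ i → i + 1 ≤ 2 * g + 1 →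
      c i * c (i + 1) * c i = c (i + 1) * c i * c (i + 1))
    (hcomm : ∀ i j, 1 ≤ i → j ≤ 2 * g + 1 → i + 2 ≤ j → c i * c j = c j * c i)
    (hdaisy : ((List.range g).map fun j => x (j + 1)).prod =
      ((List.range g).map fun j => c (2 * j + 1)).prod * (c (2 * g + 1)) ^ (g - 2))
    (hI : (prodAsc c 1 (2 * g + 1)) ^ (2 * g + 2) = 1)
    (k : ℕ) (hk : k ≤ g + 1) :
    ((((List.range g).map fun j =>
          (c (2 * j + 3))⁻¹ * c (2 * j + 2) * c (2 * j + 3)).prod) *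
        (((List.range g).map fun j =>
          c (2 * j + 1) * c (2 * j + 2) * (c (2 * j + 1))⁻¹).prod) *
        (((List.range g).map fun j => x (j + 1)).prod) *
        (c (2 * g + 1)) ^ 4) ^ k *
      ((((List.range g).map fun j =>
          (c (2 * j + 3))⁻¹ * c (2 * j + 2) * c (2 * j + 3)).prod) *
        (((List.range g).map fun j =>
          c (2 * j + 1) * c (2 * j + 2) * (c (2 * j + 1))⁻¹).prod) *
        (((List.range g).map fun j => c (2 * j + 1)).prod) *
        (c (2 * g + 1)) ^ (g + 2)) ^ (g + 1 - k) = 1 :=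
  (statement19_general g (Nat.le_of_succ_le hg) c x hbraid hcomm hdaisy k hk).trans hI
end
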